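/- Let α, β be real numbers with α > -1/2 and β > -1/2, let δ > 0 be real, let n ∈ ℕ (n ≥ 0), and let t ∈ (0, π]. Then F_n^{(α+1,β),δ}(t) = A_n^{β,α} F_n^{(α,β),δ}(t) - B_n^{α,β} F_{n+1}^{(α,β),δ}(t), where A_n^{β,α} = (n + α + 1/2)/(2n + α + β + 1) and B_n^{α,β} = (n + 1)/(2n + α + β + 1). -/

import Mathlib

open MeasureTheory Real Set

/-- Generalized binomial coefficient `C(u, v) = Γ(u+1) / (Γ(v+1) Γ(u-v+1))`. -/
noncomputable def genBinom (u v : ℝ) : ℝ :=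
  Real.Gamma (u + 1) / (Real.Gamma (v + 1) * Real.Gamma (u - v + 1))

/-- Jacobi polynomial `P_n^{(a,b)}(x)`. -/
noncomputable def jacobiP (n : ℕ) (a b x : ℝ) : ℝ :=
  ∑ k ∈ Finset.range (n + 1),
    genBinom ((n : ℝ) + a) ((n : ℝ) - (k : ℝ)) * genBinom ((n : ℝ) + b) (k : ℝ) *
      ((x - 1) / 2) ^ k * ((x + 1) / 2) ^ (n - k)

/-- `F_n^{(α,β),δ}(t)`. -/
noncomputable def FJ (n : ℕ) (α β δ t : ℝ) : ℝ :=
  ∫ θ in (0:ℝ)..t, (t - θ) ^ δ * jacobiP n (α - 1/2) (β - 1/2) (Real.cos θ) *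
    (Real.sin (θ / 2)) ^ (2 * α) * (Real.cos (θ / 2)) ^ (2 * β)

/-!
In terms of `w = (sin (θ/2))^(2α) (cos (θ/2))^(2β)`, passing from `α` to `α + 1` multiplies `w` by
`sin² (θ/2) = (1 - cos θ) / 2`, and the contiguous relation
`(2n + a + b + 2) (1 - x)/2 P_n^{(a+1,b)} = (n + a + 1) P_n^{(a,b)} - (n + 1) P_{n+1}^{(a,b)}`
absorbs this factor. Writing `P_n` as a form in `y = (x - 1)/2` and `z = (x + 1)/2`, and making the
relation homogeneous of degree `n + 1` by means of `z - y = 1`, it becomes an identity between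
coefficients, which follows from the Pascal and absorption rules for binomial coefficients.
These rules persist at the poles of `Γ`, where `Γ = 0` by convention, so that boundary
terms such as `C(u, -1) = 0` need no separate treatment.
-/

theorem inv_Gamma_eq_mul_inv_Gamma_add_one (s : ℝ) : (Gamma s)⁻¹ = s * (Gamma (s + 1))⁻¹ := by
  rcases eq_or_ne s 0 with rfl | hs
  · simp
  · rw [Gamma_add_one hs, mul_inv, mul_inv_cancel_left₀ hs]

theorem genBinom_neg_one (u : ℝ) : genBinom u (-1) = 0 := by
  simp [genBinom]

theorem add_one_mul_genBinom_eq_add_one_mul {u : ℝ} (hu : u + 1 ≠ 0) (v : ℝ) :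
    (u + 1) * genBinom u v = (v + 1) * genBinom (u + 1) (v + 1) := by
  simp only [genBinom, div_eq_mul_inv, mul_inv, Gamma_add_one hu,
    inv_Gamma_eq_mul_inv_Gamma_add_one (v + 1), add_sub_add_right_eq_sub]
  ring

theorem add_one_mul_genBinom_eq_sub_add_one_mul {u : ℝ} (hu : u + 1 ≠ 0) (v : ℝ) :
    (u + 1) * genBinom u v = (u - v + 1) * genBinom (u + 1) v := by
  simp only [genBinom, div_eq_mul_inv, mul_inv, Gamma_add_one hu,
    inv_Gamma_eq_mul_inv_Gamma_add_one (u - v + 1), add_sub_right_comm u 1 v]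
  ring

theorem genBinom_add_one_add_one {u : ℝ} (hu : u + 1 ≠ 0) (v : ℝ) :
    genBinom (u + 1) (v + 1) = genBinom u v + genBinom u (v + 1) := by
  refine mul_left_cancel₀ hu ?_
  linear_combination -add_one_mul_genBinom_eq_add_one_mul hu v -
    add_one_mul_genBinom_eq_sub_add_one_mul hu (v + 1)

/-- The coefficient of `y ^ k * z ^ (n - k)`, where `y = (x - 1) / 2` and `z = (x + 1) / 2`, in the
Jacobi polynomial `P_n^{(a,b)}(x)`. The indices are real so that `k = -1` is available. -/
noncomputable def jacobiCoeff (n a b k : ℝ) : ℝ :=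
  genBinom (n + a) (n - k) * genBinom (n + b) k

theorem jacobiCoeff_neg_one (n a b : ℝ) : jacobiCoeff n a b (-1) = 0 := by
  simp [jacobiCoeff, genBinom_neg_one]

theorem jacobiCoeff_self_add_one (n a b : ℝ) : jacobiCoeff n a b (n + 1) = 0 := by
  simp [jacobiCoeff, genBinom_neg_one]

theorem jacobiCoeff_contiguous {n a b : ℝ} (ha : n + a + 1 ≠ 0) (hb : n + b + 1 ≠ 0) (k : ℝ) :
    (2 * n + a + b + 2) * jacobiCoeff n (a + 1) b k =
      (n + a + 1) * (jacobiCoeff n a b k - jacobiCoeff n a b (k + 1)) +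
        (n + 1) * jacobiCoeff (n + 1) a b (k + 1) := by
  have lower_a := add_one_mul_genBinom_eq_sub_add_one_mul ha (n - k)
  have lower_a_pred := add_one_mul_genBinom_eq_add_one_mul ha (n - k - 1)
  have absorb_b := add_one_mul_genBinom_eq_add_one_mul hb k
  have pascal_b := genBinom_add_one_add_one hb k
  rw [sub_add_cancel] at lower_a_pred
  simp only [jacobiCoeff, ← add_assoc, add_right_comm n 1, add_sub_add_right_eq_sub n, ← sub_sub]
  linear_combination
    -genBinom (n + b) k * lower_a + genBinom (n + b) (k + 1) * lower_a_pred +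
      genBinom (n + a + 1) (n - k) * (absorb_b - (n - k) * pascal_b)

section JacobiP

variable (n : ℕ) (a b x : ℝ)

theorem jacobiP_eq_sum_jacobiCoeff :
    jacobiP n a b x = ∑ k ∈ Finset.range (n + 1),
      jacobiCoeff n a b k * ((x - 1) / 2) ^ k * ((x + 1) / 2) ^ (n - k) :=
  rfl

theorem sub_one_div_two_mul_jacobiP :
    (x - 1) / 2 * jacobiP n a b x = ∑ k ∈ Finset.range (n + 2),
      jacobiCoeff n a b (k - 1) * ((x - 1) / 2) ^ k * ((x + 1) / 2) ^ (n + 1 - k) := by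
  rw [Finset.sum_range_succ', jacobiP_eq_sum_jacobiCoeff, Finset.mul_sum]
  simp only [Nat.cast_add, Nat.cast_one, add_sub_cancel_right, Nat.cast_zero, zero_sub,
    jacobiCoeff_neg_one, zero_mul, add_zero, Nat.add_sub_add_right]
  exact Finset.sum_congr rfl fun k _ => by ring

theorem add_one_div_two_mul_jacobiP :
    (x + 1) / 2 * jacobiP n a b x = ∑ k ∈ Finset.range (n + 2),
      jacobiCoeff n a b k * ((x - 1) / 2) ^ k * ((x + 1) / 2) ^ (n + 1 - k) := by
  rw [Finset.sum_range_succ, jacobiP_eq_sum_jacobiCoeff, Finset.mul_sum, Nat.cast_add,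
    Nat.cast_one, jacobiCoeff_self_add_one, zero_mul, zero_mul, add_zero]
  refine Finset.sum_congr rfl fun k hk => ?_
  rw [Nat.sub_add_comm (Finset.mem_range_succ_iff.mp hk), pow_succ]
  ring

variable {n a b}

theorem jacobiP_contiguous (ha : n + a + 1 ≠ 0) (hb : n + b + 1 ≠ 0) :
    (2 * n + a + b + 2) * ((1 - x) / 2 * jacobiP n (a + 1) b x) =
      (n + a + 1) * jacobiP n a b x - (n + 1) * jacobiP (n + 1) a b x := by
  have homogeneous : (2 * n + a + b + 2) * ((x - 1) / 2 * jacobiP n (a + 1) b x) =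
      (n + a + 1) * ((x - 1) / 2 * jacobiP n a b x - (x + 1) / 2 * jacobiP n a b x) +
        (n + 1) * jacobiP (n + 1) a b x := by
    rw [sub_one_div_two_mul_jacobiP, sub_one_div_two_mul_jacobiP, add_one_div_two_mul_jacobiP,
      jacobiP_eq_sum_jacobiCoeff, ← Finset.sum_sub_distrib, Finset.mul_sum, Finset.mul_sum,
      Finset.mul_sum, ← Finset.sum_add_distrib]
    refine Finset.sum_congr rfl fun k _ => ?_
    have coeff := jacobiCoeff_contiguous ha hb ((k : ℝ) - 1)
    rw [sub_add_cancel] at coeff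
    rw [Nat.cast_add, Nat.cast_one]
    linear_combination ((x - 1) / 2) ^ k * ((x + 1) / 2) ^ (n + 1 - k) * coeff
  linear_combination -homogeneous

end JacobiP

theorem sin_eq_mul_sinc (x : ℝ) : sin x = x * sinc x := by
  rcases eq_or_ne x 0 with rfl | hx
  · simp
  · rw [sinc_of_ne_zero hx, mul_div_cancel₀ _ hx]

theorem sinc_pos_of_mem_Ico {x : ℝ} (hx : x ∈ Ico 0 π) : 0 < sinc x := by
  rcases hx.1.eq_or_lt with rfl | hx₀
  · simp
  · rw [sinc_of_ne_zero hx₀.ne']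
    exact div_pos (sin_pos_of_pos_of_lt_pi hx₀ hx.2) hx₀

theorem intervalIntegrable_sin_rpow {r s : ℝ} (hr : -1 < r) (hs : s ∈ Ico 0 π) :
    IntervalIntegrable (fun x => sin x ^ r) volume 0 s := by
  have sinc_pos : ∀ x ∈ uIcc 0 s, 0 < sinc x := fun x hx => by
    rw [uIcc_of_le hs.1] at hx
    exact sinc_pos_of_mem_Ico ⟨hx.1, hx.2.trans_lt hs.2⟩
  have sinc_rpow : ContinuousOn (fun x => sinc x ^ r) (uIcc 0 s) :=
    continuous_sinc.continuousOn.rpow_const fun x hx => Or.inl (sinc_pos x hx).ne'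
  refine ((intervalIntegral.intervalIntegrable_rpow' hr).mul_continuousOn sinc_rpow).congr ?_
  intro x hx
  have hx₀ : 0 ≤ x := (uIoc_of_le hs.1 ▸ hx).1.le
  simp only [sin_eq_mul_sinc x, mul_rpow hx₀ (sinc_pos x (uIoc_subset_uIcc hx)).le]

/-- The trigonometric Jacobi weight on `(0, π)`: under `x = cos θ` it is, up to a constant factor,
the weight `(1 - x)^(α-1/2) (1 + x)^(β-1/2)` times the Jacobian `sin θ`. -/
noncomputable def jacobiWeight (α β θ : ℝ) : ℝ :=
  sin (θ / 2) ^ (2 * α) * cos (θ / 2) ^ (2 * β)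

theorem jacobiWeight_add_one_left (α β : ℝ) {θ : ℝ} (hθ : sin (θ / 2) ≠ 0) :
    jacobiWeight (α + 1) β θ = (1 - cos θ) / 2 * jacobiWeight α β θ := by
  have sin_sq : sin (θ / 2) ^ 2 = (1 - cos θ) / 2 := by
    rw [sin_sq_eq_half_sub, mul_div_cancel₀ θ two_ne_zero]
    ring
  have sin_rpow : sin (θ / 2) ^ (2 * (α + 1)) = sin (θ / 2) ^ (2 * α) * sin (θ / 2) ^ 2 := by
    rw [← rpow_add_natCast hθ]
    congr 1
    push_cast
    ring
  rw [jacobiWeight, sin_rpow, sin_sq, jacobiWeight]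
  ring

theorem jacobiWeight_pi_sub (α β θ : ℝ) : jacobiWeight α β (π - θ) = jacobiWeight β α θ := by
  rw [jacobiWeight, sub_div, sin_pi_div_two_sub, cos_pi_div_two_sub, mul_comm, jacobiWeight]

theorem intervalIntegrable_jacobiWeight_of_lt_pi {α t : ℝ} (hα : -1 / 2 < α) (β : ℝ)
    (ht : t ∈ Ico 0 π) : IntervalIntegrable (jacobiWeight α β) volume 0 t := by
  have sin_rpow : IntervalIntegrable (fun θ => sin (θ / 2) ^ (2 * α)) volume 0 t := by
    have half_mem : t / 2 ∈ Ico 0 π := ⟨by linarith [ht.1], by linarith [ht.1, ht.2]⟩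
    simpa [div_eq_mul_inv] using
      (intervalIntegrable_sin_rpow (r := 2 * α) (by linarith) half_mem).comp_mul_right (c := 2⁻¹)
  refine sin_rpow.mul_continuousOn (ContinuousOn.rpow_const (by fun_prop) fun θ hθ => Or.inl ?_)
  rw [uIcc_of_le ht.1] at hθ
  exact (cos_pos_of_mem_Ioo ⟨by linarith [hθ.1, pi_pos], by linarith [hθ.2, ht.2]⟩).ne'

theorem intervalIntegrable_jacobiWeight {α β : ℝ} (hα : -1 / 2 < α) (hβ : -1 / 2 < β) :
    IntervalIntegrable (jacobiWeight α β) volume 0 π := by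
  have half_mem : π / 2 ∈ Ico 0 π := ⟨pi_div_two_pos.le, half_lt_self pi_pos⟩
  have right_half : IntervalIntegrable (jacobiWeight α β) volume π (π / 2) := by
    simpa only [jacobiWeight_pi_sub, sub_zero, sub_half] using
      (intervalIntegrable_jacobiWeight_of_lt_pi hβ α half_mem).comp_sub_left π
  exact (intervalIntegrable_jacobiWeight_of_lt_pi hα β half_mem).trans right_half.symm

theorem intervalIntegrable_sub_rpow_mul_jacobiWeight {α β δ t : ℝ} (hα : -1 / 2 < α)
    (hβ : -1 / 2 < β) (hδ : 0 ≤ δ) (ht : t ∈ Icc 0 π) :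
    IntervalIntegrable (fun θ => (t - θ) ^ δ * jacobiWeight α β θ) volume 0 t := by
  have rpow_continuous : Continuous fun θ => (t - θ) ^ δ :=
    (continuous_sub_left t).rpow_const fun _ => Or.inr hδ
  refine IntervalIntegrable.continuousOn_mul ?_ rpow_continuous.continuousOn
  exact (intervalIntegrable_jacobiWeight hα hβ).mono_set
    (uIcc_subset_uIcc_left (uIcc_of_le pi_pos.le ▸ ht))

theorem continuous_jacobiP (n : ℕ) (a b : ℝ) : Continuous (jacobiP n a b) := by
  unfold jacobiP
  fun_prop

theorem jacobiP_mul_jacobiWeight_add_one_left {n : ℕ} {α β θ : ℝ} (hα : n + α + 1 / 2 ≠ 0)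
    (hβ : n + β + 1 / 2 ≠ 0) (hαβ : 2 * n + α + β + 1 ≠ 0) (hθ : sin (θ / 2) ≠ 0) :
    jacobiP n (α + 1 - 1 / 2) (β - 1 / 2) (cos θ) * jacobiWeight (α + 1) β θ =
      ((n + α + 1 / 2) / (2 * n + α + β + 1) * jacobiP n (α - 1 / 2) (β - 1 / 2) (cos θ) -
        (n + 1) / (2 * n + α + β + 1) * jacobiP (n + 1) (α - 1 / 2) (β - 1 / 2) (cos θ)) *
          jacobiWeight α β θ := by
  have contiguous : (2 * n + α + β + 1) *
      ((1 - cos θ) / 2 * jacobiP n (α + 1 - 1 / 2) (β - 1 / 2) (cos θ)) =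
        (n + α + 1 / 2) * jacobiP n (α - 1 / 2) (β - 1 / 2) (cos θ) -
          (n + 1) * jacobiP (n + 1) (α - 1 / 2) (β - 1 / 2) (cos θ) := by
    rw [add_sub_right_comm α 1]
    linear_combination jacobiP_contiguous (a := α - 1 / 2) (b := β - 1 / 2) (cos θ)
      (fun h => hα (by linear_combination h)) (fun h => hβ (by linear_combination h))
  rw [div_mul_eq_mul_div, div_mul_eq_mul_div, ← sub_div, ← contiguous,
    mul_div_cancel_left₀ _ hαβ, jacobiWeight_add_one_left α β hθ]
  ring

theorem FJ_eq_integral_jacobiP_mul (n : ℕ) (α β δ t : ℝ) :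
    FJ n α β δ t = ∫ θ in (0 : ℝ)..t,
      jacobiP n (α - 1 / 2) (β - 1 / 2) (cos θ) * ((t - θ) ^ δ * jacobiWeight α β θ) := by
  simp only [FJ, jacobiWeight]
  congr with θ
  ring

theorem FJ_alpha_recurrence_general {n : ℕ} {α β δ t : ℝ} (hα : n + α + 1 / 2 ≠ 0)
    (hβ : n + β + 1 / 2 ≠ 0) (hαβ : 2 * n + α + β + 1 ≠ 0) (ht : t ∈ Ioc 0 π)
    (hint : IntervalIntegrable (fun θ => (t - θ) ^ δ * jacobiWeight α β θ) volume 0 t) :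
    FJ n (α + 1) β δ t =
      (n + α + 1 / 2) / (2 * n + α + β + 1) * FJ n α β δ t -
        (n + 1) / (2 * n + α + β + 1) * FJ (n + 1) α β δ t := by
  have integrable (m : ℕ) : IntervalIntegrable (fun θ => jacobiP m (α - 1 / 2) (β - 1 / 2) (cos θ) *
      ((t - θ) ^ δ * jacobiWeight α β θ)) volume 0 t :=
    hint.continuousOn_mul ((continuous_jacobiP m _ _).comp continuous_cos).continuousOn
  simp only [FJ_eq_integral_jacobiP_mul]
  rw [← intervalIntegral.integral_const_mul, ← intervalIntegral.integral_const_mul,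
    ← intervalIntegral.integral_sub ((integrable n).const_mul _) ((integrable (n + 1)).const_mul _)]
  refine intervalIntegral.integral_congr_Ioo_of_le ht.1.le fun θ hθ => ?_
  have sin_pos : 0 < sin (θ / 2) :=
    sin_pos_of_pos_of_lt_pi (half_pos hθ.1) (by linarith [hθ.2, ht.2, pi_pos])
  linear_combination
    (t - θ) ^ δ * jacobiP_mul_jacobiWeight_add_one_left hα hβ hαβ sin_pos.ne'

theorem FJ_alpha_recurrence (α β : ℝ) (hα : -1/2 < α) (hβ : -1/2 < β) (δ : ℝ)
    (hδ : 0 < δ) (n : ℕ) (t : ℝ) (ht : t ∈ Set.Ioc (0:ℝ) π) :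
    FJ n (α + 1) β δ t =
      ((n : ℝ) + α + 1/2) / (2 * (n : ℝ) + α + β + 1) * FJ n α β δ t -
      ((n : ℝ) + 1) / (2 * (n : ℝ) + α + β + 1) * FJ (n + 1) α β δ t := by
  have n_nonneg : (0 : ℝ) ≤ n := n.cast_nonneg
  have integrable := intervalIntegrable_sub_rpow_mul_jacobiWeight hα hβ hδ.le ⟨ht.1.le, ht.2⟩
  exact FJ_alpha_recurrence_general (by linarith [n_nonneg]) (by linarith [n_nonneg])
    (by linarith [n_nonneg]) ht integrable
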